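/- arXiv:math-ph/0110023 — 8 statements merged into one kernel-verified Lean document; each statement's English description precedes it below -/
import Mathlib

section
/- Let n ≥ 1, let A : ℝ → Matrix (Fin n) (Fin n) ℝ and B : ℝ → (Fin n → ℝ) be continuous. Suppose x₁, …, x_{n+1} : ℝ → (Fin n → ℝ) are differentiable solutions of the inhomogeneous linear system x'(t) = A(t) · x(t) + B(t) such that the vectors x₂(0) − x₁(0), …, x_{n+1}(0) − x₁(0) form a basis of ℝⁿ. Then for every differentiable solution x of the same system there exist unique constants k₁, …, kₙ ∈ ℝ such that x(t) = x₁(t) + k₁·(x₂(t) − x₁(t)) + ⋯ + kₙ·(x_{n+1}(t) − x₁(t)) for all t ∈ ℝ. -/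
section Helper
attribute [local instance] Matrix.linftyOpNormedAddCommGroup

/-- Uniqueness of solutions of the inhomogeneous linear system with given value at `0`. -/
theorem linear_system_unique (n : ℕ)
    (A : ℝ → Matrix (Fin n) (Fin n) ℝ) (hA : Continuous A) (B : ℝ → (Fin n → ℝ))
    (f g : ℝ → (Fin n → ℝ))
    (hf : ∀ t, HasDerivAt f ((A t).mulVec (f t) + B t) t)
    (hg : ∀ t, HasDerivAt g ((A t).mulVec (g t) + B t) t)
    (h0 : f 0 = g 0) (t : ℝ) : f t = g t := by
  have ht : t ∈ Set.Ioo (-|t| - 1) (|t| + 1) :=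
    ⟨by linarith [neg_abs_le t], by linarith [le_abs_self t]⟩
  have ht0 : (0 : ℝ) ∈ Set.Ioo (-|t| - 1) (|t| + 1) :=
    ⟨by linarith [abs_nonneg t], by linarith [abs_nonneg t]⟩
  obtain ⟨C, hC⟩ := (isCompact_Icc (a := -|t| - 1) (b := |t| + 1)).exists_bound_of_continuousOn
    (f := A) hA.continuousOn
  refine ODE_solution_unique_of_mem_Ioo (v := fun s y => (A s).mulVec y + B s)
    (s := fun _ => Set.univ) (K := C.toNNReal) ?_ ht0
    (fun s _ => ⟨hf s, trivial⟩) (fun s _ => ⟨hg s, trivial⟩) h0 ht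
  intro s hs
  refine LipschitzOnWith.of_dist_le_mul fun y _ z _ => ?_
  rw [dist_eq_norm, dist_eq_norm, add_sub_add_right_eq_sub, ← Matrix.mulVec_sub]
  refine (Matrix.linfty_opNorm_mulVec (A s) (y - z)).trans ?_
  gcongr
  exact (hC s (Set.Ioo_subset_Icc_self hs)).trans (Real.le_coe_toNNReal C)

end Helper

/-- Lie superposition for inhomogeneous linear systems: the general solution is an
affine combination, with unique constants, of `n+1` particular solutions whose
initial differences form a basis of `ℝⁿ`. -/
theorem inhomogeneous_linear_superposition
    (n : ℕ) (hn : 1 ≤ n)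
    (A : ℝ → Matrix (Fin n) (Fin n) ℝ) (hA : Continuous A)
    (B : ℝ → (Fin n → ℝ)) (hB : Continuous B)
    (xs : Fin (n + 1) → ℝ → (Fin n → ℝ))
    (hxs_diff : ∀ a, Differentiable ℝ (xs a))
    (hxs_sol : ∀ a t, deriv (xs a) t = (A t).mulVec (xs a t) + B t)
    (hindep : LinearIndependent ℝ (fun a : Fin n => xs a.succ 0 - xs 0 0))
    (hspan : Submodule.span ℝ (Set.range fun a : Fin n => xs a.succ 0 - xs 0 0) = ⊤)
    (x : ℝ → (Fin n → ℝ))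
    (hx_diff : Differentiable ℝ x)
    (hx_sol : ∀ t, deriv x t = (A t).mulVec (x t) + B t) :
    ∃! k : Fin n → ℝ, ∀ t, x t = xs 0 t + ∑ a : Fin n, k a • (xs a.succ t - xs 0 t) := by
  have hder : ∀ a t, HasDerivAt (xs a) ((A t).mulVec (xs a t) + B t) t := fun a t => by
    rw [← hxs_sol a t]; exact (hxs_diff a t).hasDerivAt
  have hmem : x 0 - xs 0 0 ∈
      Submodule.span ℝ (Set.range fun a : Fin n => xs a.succ 0 - xs 0 0) := by
    rw [hspan]; trivial
  obtain ⟨k, hk⟩ := (Submodule.mem_span_range_iff_exists_fun ℝ).1 hmem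
  refine ⟨k, ?_, ?_⟩
  · refine linear_system_unique n A hA B x _
      (fun t => by rw [← hx_sol t]; exact (hx_diff t).hasDerivAt) (fun t => ?_) ?_
    · have h1 := (hder 0 t).add (HasDerivAt.fun_sum (u := Finset.univ) fun a _ =>
        ((hder (Fin.succ a) t).sub (hder 0 t)).const_smul (k a))
      have h2 : (A t).mulVec (xs 0 t + ∑ a : Fin n, k a • (xs a.succ t - xs 0 t)) + B t =
          ((A t).mulVec (xs 0 t) + B t) + ∑ a : Fin n, k a •
            (((A t).mulVec (xs a.succ t) + B t) - ((A t).mulVec (xs 0 t) + B t)) := by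
        simp only [Matrix.mulVec_add, Matrix.mulVec_sum, Matrix.mulVec_smul, Matrix.mulVec_sub,
          add_sub_add_right_eq_sub]
        abel
      exact h2 ▸ h1
    · change x 0 = xs 0 0 + ∑ a : Fin n, k a • (xs a.succ 0 - xs 0 0)
      rw [hk]; abel
  · intro k' hk'
    have h0 : ∑ a : Fin n, k' a • (xs a.succ 0 - xs 0 0) =
        ∑ a : Fin n, k a • (xs a.succ 0 - xs 0 0) := by
      rw [hk, hk' 0]; abel
    have h1 := Fintype.linearIndependent_iff.1 hindep (fun a => k' a - k a)
      (by simp only [sub_smul, Finset.sum_sub_distrib]; rw [h0, sub_self])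
    exact funext fun a => sub_eq_zero.1 (h1 a)
end

section
/- Let c₀, c₁, c₂ : ℝ → ℝ and let x, x₁, x₂, x₃ : ℝ → ℝ be differentiable solutions of the Riccati equation y'(t) = c₀(t) + c₁(t)·y(t) + c₂(t)·y(t)². Assume that for all t ∈ ℝ one has x(t) ≠ x₂(t) and x₃(t) ≠ x₁(t). Then the function t ↦ ((x(t) − x₁(t))/(x(t) − x₂(t))) · ((x₃(t) − x₂(t))/(x₃(t) − x₁(t))) is constant on ℝ. -/
/-- The cross ratio of four solutions of a Riccati equation is constant. -/
theorem riccati_cross_ratio_constant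
    (c₀ c₁ c₂ : ℝ → ℝ) (x x₁ x₂ x₃ : ℝ → ℝ)
    (hx : ∀ t, HasDerivAt x (c₀ t + c₁ t * x t + c₂ t * (x t) ^ 2) t)
    (hx₁ : ∀ t, HasDerivAt x₁ (c₀ t + c₁ t * x₁ t + c₂ t * (x₁ t) ^ 2) t)
    (hx₂ : ∀ t, HasDerivAt x₂ (c₀ t + c₁ t * x₂ t + c₂ t * (x₂ t) ^ 2) t)
    (hx₃ : ∀ t, HasDerivAt x₃ (c₀ t + c₁ t * x₃ t + c₂ t * (x₃ t) ^ 2) t)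
    (hne₁ : ∀ t, x t ≠ x₂ t) (hne₂ : ∀ t, x₃ t ≠ x₁ t) :
    ∀ t s : ℝ,
      ((x t - x₁ t) / (x t - x₂ t)) * ((x₃ t - x₂ t) / (x₃ t - x₁ t)) =
      ((x s - x₁ s) / (x s - x₂ s)) * ((x₃ s - x₂ s) / (x₃ s - x₁ s)) := by
  have key : ∀ t, HasDerivAt
      (fun t => ((x t - x₁ t) / (x t - x₂ t)) * ((x₃ t - x₂ t) / (x₃ t - x₁ t))) 0 t := by
    intro t
    have h1 : x t - x₂ t ≠ 0 := sub_ne_zero.mpr (hne₁ t)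
    have h2 : x₃ t - x₁ t ≠ 0 := sub_ne_zero.mpr (hne₂ t)
    have h := (((hx t).fun_sub (hx₁ t)).fun_div ((hx t).fun_sub (hx₂ t)) h1).fun_mul
      (((hx₃ t).fun_sub (hx₂ t)).fun_div ((hx₃ t).fun_sub (hx₁ t)) h2)
    refine h.congr_deriv ?_
    field_simp
    ring
  intro t s
  exact is_const_of_deriv_eq_zero (fun t => (key t).differentiableAt)
    (fun t => (key t).deriv) t s
end

section
/- Let c₀, c₁, c₂ : ℝ → ℝ and let x₁, x₂, x₃ : ℝ → ℝ be differentiable solutions of the Riccati equation y'(t) = c₀(t) + c₁(t)·y(t) + c₂(t)·y(t)². Let k ∈ ℝ be a constant such that (x₃(t) − x₂(t)) + k·(x₁(t) − x₃(t)) ≠ 0 for all t ∈ ℝ. Then the function x(t) = (x₁(t)·(x₃(t) − x₂(t)) + k·x₂(t)·(x₁(t) − x₃(t))) / ((x₃(t) − x₂(t)) + k·(x₁(t) − x₃(t))) is differentiable and is also a solution of the same Riccati equation. -/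
/-- The superposition formula for the Riccati equation: the combination of three
solutions with constant `k` is again a (differentiable) solution. -/
theorem riccati_superposition_formula
    (c₀ c₁ c₂ : ℝ → ℝ) (x₁ x₂ x₃ : ℝ → ℝ)
    (hx₁ : ∀ t, HasDerivAt x₁ (c₀ t + c₁ t * x₁ t + c₂ t * (x₁ t) ^ 2) t)
    (hx₂ : ∀ t, HasDerivAt x₂ (c₀ t + c₁ t * x₂ t + c₂ t * (x₂ t) ^ 2) t)
    (hx₃ : ∀ t, HasDerivAt x₃ (c₀ t + c₁ t * x₃ t + c₂ t * (x₃ t) ^ 2) t)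
    (k : ℝ)
    (hD : ∀ t, (x₃ t - x₂ t) + k * (x₁ t - x₃ t) ≠ 0)
    (x : ℝ → ℝ)
    (hxdef : ∀ t, x t =
      (x₁ t * (x₃ t - x₂ t) + k * x₂ t * (x₁ t - x₃ t)) /
        ((x₃ t - x₂ t) + k * (x₁ t - x₃ t))) :
    ∀ t, HasDerivAt x (c₀ t + c₁ t * x t + c₂ t * (x t) ^ 2) t := by
  intro t
  have hx : x = fun t => (x₁ t * (x₃ t - x₂ t) + k * x₂ t * (x₁ t - x₃ t)) /
        ((x₃ t - x₂ t) + k * (x₁ t - x₃ t)) := funext hxdef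
  have hN := ((hx₁ t).fun_mul ((hx₃ t).fun_sub (hx₂ t))).fun_add
    (((hx₂ t).const_mul k).fun_mul ((hx₁ t).fun_sub (hx₃ t)))
  have hE := ((hx₃ t).fun_sub (hx₂ t)).fun_add (((hx₁ t).fun_sub (hx₃ t)).const_mul k)
  have h := hN.fun_div hE (hD t)
  rw [hxdef t, hx]
  refine h.congr_deriv ?_
  have hd := hD t
  generalize x₁ t = a at *
  generalize x₂ t = b at *
  generalize x₃ t = c at *
  generalize hq : (c - b) + k * (a - c) = q at *
  field_simp
  subst hq
  ring
end

section
/- Let b₁, b₂, b₃ : ℝ → ℝ and let (x₁,y₁), (x₂,y₂), (x₃,y₃) : ℝ → ℝ × ℝ be three differentiable solutions of the planar system x' = b₁(t) + b₂(t)·x + b₃(t)·(x² − y²), y' = b₂(t)·y + 2·b₃(t)·x·y. Let k₁, k₂ ∈ ℝ and define, pointwise in t, N_x = x₁((x₂−x₃)² + (y₂−y₃)²) + k₁(x₂²x₃ + (x₃−x₂)x₁² + (y₁−y₂)²x₃ − x₂(x₃² + (y₁−y₃)²) − x₁((x₂−x₃)² + (y₂−y₃)²)) + k₂(x₃²(y₂−y₁)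 + x₂²(y₁−y₃) + (y₃−y₂)(x₁² + (y₁−y₂)(y₁−y₃))) + (k₁²+k₂²)·x₂·((x₁−x₃)² + (y₁−y₃)²); N_y = y₁((x₂−x₃)² + (y₂−y₃)²) + k₁(x₂²(y₃−y₁) − x₃²(y₁+y₂) + 2x₂(x₃y₁ − x₁y₃) + 2x₁x₃y₂ − (x₁² + (y₁+y₂)(y₁−y₃))(y₂−y₃)) + k₂(x₁²(x₂−x₃) + x₂²x₃ + x₃(y₂²−y₁²) − x₂(x₃² + y₃² − y₁²) + x₁(x₃² − x₂² + y₃² − y₂²)) + (k₁²+k₂²)·y₂·((x₁−x₃)² + (y₁−y₃)²); D = (x₂−x₃)² + (y₂−y₃)² − 2k₁((x₁−x₃)(x₂−x₃) + (y₁−y₃)(y₂−y₃)) + 2k₂(x₃(y₂−y₁) + x₂(y₁−y₃) + x₁(y₃−y₂)) + (k₁²+k₂²)((x₁−x₃)² + (y₁−y₃)²). If D(t) ≠ 0 for all t ∈ ℝ, then the pair (x, y) = (N_x/D, N_y/D) is differentiable and is also a solution of the same planar system. -/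
open Complex in
/-- The complex Riccati superposition rule. -/
theorem riccati_aux (b₁ b₂ b₃ : ℂ) (z₁ z₂ z₃ : ℝ → ℂ) (k : ℂ) (t : ℝ)
    (h₁ : HasDerivAt z₁ (b₁ + b₂ * z₁ t + b₃ * z₁ t ^ 2) t)
    (h₂ : HasDerivAt z₂ (b₁ + b₂ * z₂ t + b₃ * z₂ t ^ 2) t)
    (h₃ : HasDerivAt z₃ (b₁ + b₂ * z₃ t + b₃ * z₃ t ^ 2) t)
    (w : ℂ)
    (hd : z₂ t - z₃ t - k * (z₁ t - z₃ t) ≠ 0)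
    (hw : (z₁ t * (z₂ t - z₃ t) - k * (z₂ t * (z₁ t - z₃ t))) /
        (z₂ t - z₃ t - k * (z₁ t - z₃ t)) = w) :
    HasDerivAt (fun s => (z₁ s * (z₂ s - z₃ s) - k * (z₂ s * (z₁ s - z₃ s))) /
        (z₂ s - z₃ s - k * (z₁ s - z₃ s))) (b₁ + b₂ * w + b₃ * w ^ 2) t := by
  have hn := (h₁.mul (h₂.sub h₃)).sub ((h₂.mul (h₁.sub h₃)).const_mul k)
  have hdd := (h₂.sub h₃).sub ((h₁.sub h₃).const_mul k)
  have h := hn.div hdd hd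
  refine h.congr_deriv ?_
  subst hw
  simp only [Pi.sub_apply, Pi.mul_apply]
  field_simp
  ring

/-- Assembling a complex solution from a real one. -/
theorem complexify_aux (b₁ b₂ b₃ x y : ℝ → ℝ) (t : ℝ)
    (hx : HasDerivAt x (b₁ t + b₂ t * x t + b₃ t * ((x t) ^ 2 - (y t) ^ 2)) t)
    (hy : HasDerivAt y (b₂ t * y t + 2 * b₃ t * x t * y t) t) :
    HasDerivAt (fun s => (x s : ℂ) + y s * Complex.I)
      ((b₁ t : ℂ) + b₂ t * ((x t : ℂ) + y t * Complex.I)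
        + b₃ t * ((x t : ℂ) + y t * Complex.I) ^ 2) t := by
  refine (hx.ofReal_comp.add (hy.ofReal_comp.mul_const Complex.I)).congr_deriv ?_
  push_cast
  linear_combination (-(b₃ t : ℂ) * (y t : ℂ) ^ 2) * Complex.I_sq

/-- The nonlinear superposition formula for the planar `sl(2,ℝ)` Lie system
`x' = b₁ + b₂ x + b₃ (x² − y²)`, `y' = b₂ y + 2 b₃ x y`: the combination
`(N_x/D, N_y/D)` of three solutions with constants `k₁, k₂` is again a solution. -/
theorem planar_sl2_superposition_formula
    (b₁ b₂ b₃ : ℝ → ℝ) (x₁ y₁ x₂ y₂ x₃ y₃ : ℝ → ℝ)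
    (hx₁ : ∀ t, HasDerivAt x₁ (b₁ t + b₂ t * x₁ t + b₃ t * ((x₁ t) ^ 2 - (y₁ t) ^ 2)) t)
    (hy₁ : ∀ t, HasDerivAt y₁ (b₂ t * y₁ t + 2 * b₃ t * x₁ t * y₁ t) t)
    (hx₂ : ∀ t, HasDerivAt x₂ (b₁ t + b₂ t * x₂ t + b₃ t * ((x₂ t) ^ 2 - (y₂ t) ^ 2)) t)
    (hy₂ : ∀ t, HasDerivAt y₂ (b₂ t * y₂ t + 2 * b₃ t * x₂ t * y₂ t) t)
    (hx₃ : ∀ t, HasDerivAt x₃ (b₁ t + b₂ t * x₃ t + b₃ t * ((x₃ t) ^ 2 - (y₃ t) ^ 2)) t)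
    (hy₃ : ∀ t, HasDerivAt y₃ (b₂ t * y₃ t + 2 * b₃ t * x₃ t * y₃ t) t)
    (k₁ k₂ : ℝ)
    (Nx Ny D : ℝ → ℝ)
    (hNx : ∀ t, Nx t =
      x₁ t * ((x₂ t - x₃ t) ^ 2 + (y₂ t - y₃ t) ^ 2)
      + k₁ * ((x₂ t) ^ 2 * x₃ t + (x₃ t - x₂ t) * (x₁ t) ^ 2 + (y₁ t - y₂ t) ^ 2 * x₃ t
          - x₂ t * ((x₃ t) ^ 2 + (y₁ t - y₃ t) ^ 2)
          - x₁ t * ((x₂ t - x₃ t) ^ 2 + (y₂ t - y₃ t) ^ 2))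
      + k₂ * ((x₃ t) ^ 2 * (y₂ t - y₁ t) + (x₂ t) ^ 2 * (y₁ t - y₃ t)
          + (y₃ t - y₂ t) * ((x₁ t) ^ 2 + (y₁ t - y₂ t) * (y₁ t - y₃ t)))
      + (k₁ ^ 2 + k₂ ^ 2) * x₂ t * ((x₁ t - x₃ t) ^ 2 + (y₁ t - y₃ t) ^ 2))
    (hNy : ∀ t, Ny t =
      y₁ t * ((x₂ t - x₃ t) ^ 2 + (y₂ t - y₃ t) ^ 2)
      + k₁ * ((x₂ t) ^ 2 * (y₃ t - y₁ t) - (x₃ t) ^ 2 * (y₁ t + y₂ t)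
          + 2 * x₂ t * (x₃ t * y₁ t - x₁ t * y₃ t) + 2 * x₁ t * x₃ t * y₂ t
          - ((x₁ t) ^ 2 + (y₁ t + y₂ t) * (y₁ t - y₃ t)) * (y₂ t - y₃ t))
      + k₂ * ((x₁ t) ^ 2 * (x₂ t - x₃ t) + (x₂ t) ^ 2 * x₃ t
          + x₃ t * ((y₂ t) ^ 2 - (y₁ t) ^ 2)
          - x₂ t * ((x₃ t) ^ 2 + (y₃ t) ^ 2 - (y₁ t) ^ 2)
          + x₁ t * ((x₃ t) ^ 2 - (x₂ t) ^ 2 + (y₃ t) ^ 2 - (y₂ t) ^ 2))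
      + (k₁ ^ 2 + k₂ ^ 2) * y₂ t * ((x₁ t - x₃ t) ^ 2 + (y₁ t - y₃ t) ^ 2))
    (hD : ∀ t, D t =
      (x₂ t - x₃ t) ^ 2 + (y₂ t - y₃ t) ^ 2
      - 2 * k₁ * ((x₁ t - x₃ t) * (x₂ t - x₃ t) + (y₁ t - y₃ t) * (y₂ t - y₃ t))
      + 2 * k₂ * (x₃ t * (y₂ t - y₁ t) + x₂ t * (y₁ t - y₃ t) + x₁ t * (y₃ t - y₂ t))
      + (k₁ ^ 2 + k₂ ^ 2) * ((x₁ t - x₃ t) ^ 2 + (y₁ t - y₃ t) ^ 2))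
    (hD_ne : ∀ t, D t ≠ 0) :
    ∀ t,
      HasDerivAt (fun s => Nx s / D s)
        (b₁ t + b₂ t * (Nx t / D t) + b₃ t * ((Nx t / D t) ^ 2 - (Ny t / D t) ^ 2)) t ∧
      HasDerivAt (fun s => Ny s / D s)
        (b₂ t * (Ny t / D t) + 2 * b₃ t * (Nx t / D t) * (Ny t / D t)) t := by
  intro t
  have hne : ∀ s, ((x₂ s : ℂ) + y₂ s * Complex.I) - ((x₃ s : ℂ) + y₃ s * Complex.I)
      - ((k₁ : ℂ) + k₂ * Complex.I) *
        (((x₁ s : ℂ) + y₁ s * Complex.I) - ((x₃ s : ℂ) + y₃ s * Complex.I)) ≠ 0 := by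
    intro s h
    have hr := congrArg Complex.re h
    have hi := congrArg Complex.im h
    simp at hr hi
    apply hD_ne s
    rw [hD s]
    linear_combination
      ((x₂ s - x₃ s) - (k₁ * (x₁ s - x₃ s) - k₂ * (y₁ s - y₃ s))) * hr
      + ((y₂ s - y₃ s) - (k₁ * (y₁ s - y₃ s) + k₂ * (x₁ s - x₃ s))) * hi
  have hq : ∀ s, (((x₁ s : ℂ) + y₁ s * Complex.I) *
        (((x₂ s : ℂ) + y₂ s * Complex.I) - ((x₃ s : ℂ) + y₃ s * Complex.I))
      - ((k₁ : ℂ) + k₂ * Complex.I) * (((x₂ s : ℂ) + y₂ s * Complex.I) *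
        (((x₁ s : ℂ) + y₁ s * Complex.I) - ((x₃ s : ℂ) + y₃ s * Complex.I)))) /
      (((x₂ s : ℂ) + y₂ s * Complex.I) - ((x₃ s : ℂ) + y₃ s * Complex.I)
      - ((k₁ : ℂ) + k₂ * Complex.I) *
        (((x₁ s : ℂ) + y₁ s * Complex.I) - ((x₃ s : ℂ) + y₃ s * Complex.I)))
      = ((Nx s / D s : ℝ) : ℂ) + (Ny s / D s : ℝ) * Complex.I := by
    intro s
    have hDs : (D s : ℂ) ≠ 0 := by exact_mod_cast hD_ne s
    have e : ((Nx s / D s : ℝ) : ℂ) + (Ny s / D s : ℝ) * Complex.I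
        = ((Nx s : ℂ) + Ny s * Complex.I) / D s := by
      push_cast
      ring
    rw [e, div_eq_div_iff (hne s) hDs, hNx s, hNy s, hD s]
    apply Complex.ext
    · simp [-Complex.ofReal_add, -Complex.ofReal_mul, -Complex.ofReal_sub, -Complex.ofReal_pow]
      ring
    · simp [-Complex.ofReal_add, -Complex.ofReal_mul, -Complex.ofReal_sub, -Complex.ofReal_pow]
      ring
  have h := riccati_aux (b₁ t) (b₂ t) (b₃ t) _ _ _ ((k₁ : ℂ) + k₂ * Complex.I) t
    (complexify_aux b₁ b₂ b₃ x₁ y₁ t (hx₁ t) (hy₁ t))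
    (complexify_aux b₁ b₂ b₃ x₂ y₂ t (hx₂ t) (hy₂ t))
    (complexify_aux b₁ b₂ b₃ x₃ y₃ t (hx₃ t) (hy₃ t)) _ (hne t) (hq t)
  simp only [hq] at h
  have hre := Complex.reCLM.hasFDerivAt.comp_hasDerivAt t h
  have him := Complex.imCLM.hasFDerivAt.comp_hasDerivAt t h
  generalize Nx t / D t = X at hre him ⊢
  generalize Ny t / D t = Y at hre him ⊢
  constructor
  · refine (hre.congr_deriv ?_).congr_of_eventuallyEq (Filter.Eventually.of_forall fun s => ?_)
    · simp [pow_two, -Complex.ofReal_div]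
    · simp [-Complex.ofReal_div]
  · refine (him.congr_deriv ?_).congr_of_eventuallyEq (Filter.Eventually.of_forall fun s => ?_)
    · simp [pow_two, -Complex.ofReal_div]
      ring
    · simp [-Complex.ofReal_div]
end

section
/- Let c₀, c₁, c₂ : ℝ → ℝ and let x, x₁ : ℝ → ℝ be differentiable solutions of the Riccati equation y'(t) = c₀(t) + c₁(t)·y(t) + c₂(t)·y(t)². Assume x₁(t) ≠ 0 and x(t) ≠ x₁(t) for all t ∈ ℝ. Then the function x̃(t) = x(t)·x₁(t)/(x₁(t) − x(t)) is differentiable and satisfies x̃'(t) = (2·c₀(t)/x₁(t) + c₁(t))·x̃(t) + c₀(t) for all t ∈ ℝ. -/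
/-- Reduction of the Riccati equation using a particular solution `x₁` via the
change of variable `x̃ = x x₁/(x₁ − x)` (stabilizer of the origin): `x̃`
satisfies the inhomogeneous linear equation `x̃' = (2c₀/x₁ + c₁) x̃ + c₀`. -/
theorem riccati_reduction_stabilizer_of_zero
    (c₀ c₁ c₂ : ℝ → ℝ) (x x₁ : ℝ → ℝ)
    (hx : ∀ t, HasDerivAt x (c₀ t + c₁ t * x t + c₂ t * (x t) ^ 2) t)
    (hx₁ : ∀ t, HasDerivAt x₁ (c₀ t + c₁ t * x₁ t + c₂ t * (x₁ t) ^ 2) t)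
    (hx₁_ne : ∀ t, x₁ t ≠ 0)
    (hne : ∀ t, x t ≠ x₁ t) :
    ∀ t, HasDerivAt (fun s => x s * x₁ s / (x₁ s - x s))
      ((2 * c₀ t / x₁ t + c₁ t) * (x t * x₁ t / (x₁ t - x t)) + c₀ t) t := by
  intro t
  have h0 := hx₁_ne t
  have h1 : x₁ t - x t ≠ 0 := sub_ne_zero.mpr (hne t).symm
  have h := ((hx t).mul (hx₁ t)).div ((hx₁ t).sub (hx t)) h1
  refine h.congr_deriv ?_
  simp only [Pi.mul_apply, Pi.sub_apply]
  field_simp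
  ring
end

section
/- Let m ∈ ℝ with m ≠ 0, let f : ℝ → ℝ be continuous, and let x, p : ℝ → ℝ be differentiable with x'(t) = p(t)/m and p'(t) = −f(t) for all t ∈ ℝ. Then the functions I₁(t) = p(t) + ∫₀ᵗ f(s) ds and I₂(t) = x(t) − (t/m)·(p(t) + ∫₀ᵗ f(s) ds) + (1/m)·∫₀ᵗ (∫₀^{s} f(u) du) ds are constant on ℝ. -/
/-- The constants of motion `I₁` and `I₂` of the classical time-dependent
linear potential model `x' = p/m`, `p' = −f(t)`. -/
theorem classical_linear_potential_constants_of_motion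
    (m : ℝ) (hm : m ≠ 0) (f : ℝ → ℝ) (hf : Continuous f)
    (x p : ℝ → ℝ)
    (hx : ∀ t, HasDerivAt x (p t / m) t)
    (hp : ∀ t, HasDerivAt p (-f t) t)
    (I₁ I₂ : ℝ → ℝ)
    (hI₁ : ∀ t, I₁ t = p t + ∫ s in (0:ℝ)..t, f s)
    (hI₂ : ∀ t, I₂ t = x t - (t / m) * (p t + ∫ s in (0:ℝ)..t, f s)
      + (1 / m) * ∫ s in (0:ℝ)..t, (∫ u in (0:ℝ)..s, f u)) :
    (∀ t₁ t₂, I₁ t₁ = I₁ t₂) ∧ (∀ t₁ t₂, I₂ t₁ = I₂ t₂) := by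
  have hF : ∀ t, HasDerivAt (fun t => ∫ s in (0:ℝ)..t, f s) (f t) t := fun t =>
    intervalIntegral.integral_hasDerivAt_right (hf.intervalIntegrable _ _)
      (hf.stronglyMeasurableAtFilter _ _) hf.continuousAt
  have hFc : Continuous (fun t => ∫ s in (0:ℝ)..t, f s) :=
    continuous_iff_continuousAt.2 fun t => (hF t).continuousAt
  have hG : ∀ t, HasDerivAt (fun t => ∫ s in (0:ℝ)..t, (∫ u in (0:ℝ)..s, f u))
      (∫ u in (0:ℝ)..t, f u) t := fun t =>
    intervalIntegral.integral_hasDerivAt_right (hFc.intervalIntegrable _ _)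
      (hFc.stronglyMeasurableAtFilter _ _) hFc.continuousAt
  have h1 : ∀ t, HasDerivAt (fun t => p t + ∫ s in (0:ℝ)..t, f s) 0 t := fun t =>
    ((hp t).add (hF t)).congr_deriv (by ring)
  have h2 : ∀ t, HasDerivAt I₂ 0 t := by
    intro t
    rw [funext hI₂]
    refine (((hx t).sub (((hasDerivAt_id' t).div_const m).mul (h1 t))).add
      ((hG t).const_mul (1 / m))).congr_deriv ?_
    ring
  have h1' : ∀ t, HasDerivAt I₁ 0 t := by
    rw [funext hI₁]
    exact h1
  exact ⟨is_const_of_deriv_eq_zero (fun t => (h1' t).differentiableAt) fun t => (h1' t).deriv,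
    is_const_of_deriv_eq_zero (fun t => (h2 t).differentiableAt) fun t => (h2 t).deriv⟩
end

section
/- Let m ∈ ℝ with m ≠ 0 and let f : ℝ → ℝ be continuous. Define u₁(t) = t/m, u₂(t) = −∫₀ᵗ f(s) ds, u₃(t) = (1/m)·∫₀ᵗ (∫₀^{s} f(u) du) ds, and u₄(t) = (1/m)·∫₀ᵗ f(s)·(∫₀^{s} (∫₀^{u} f(w) dw) du) ds + (1/(2m))·∫₀ᵗ (∫₀^{s} f(u) du)² ds. Then u₁(0) = u₂(0) = u₃(0) = u₄(0) = 0 and for all t ∈ ℝ: u₁'(t) = 1/m, u₂'(t) = −f(t), u₃'(t) = −u₂(t)/m, and u₄'(t) = f(t)·u₃(t) + u₂(t)²/(2m). -/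
/-- The solution of the Wei–Norman system for the quantum time-dependent linear
potential on the centrally extended Heisenberg algebra: `u₁' = 1/m`,
`u₂' = −f`, `u₃' = −u₂/m`, `u₄' = f u₃ + u₂²/(2m)`, with zero initial
conditions. -/
theorem wei_norman_quantum_linear_potential
    (m : ℝ) (hm : m ≠ 0) (f : ℝ → ℝ) (hf : Continuous f)
    (u₁ u₂ u₃ u₄ : ℝ → ℝ)
    (hu₁ : ∀ t, u₁ t = t / m)
    (hu₂ : ∀ t, u₂ t = -∫ s in (0:ℝ)..t, f s)
    (hu₃ : ∀ t, u₃ t = (1 / m) * ∫ s in (0:ℝ)..t, (∫ u in (0:ℝ)..s, f u))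
    (hu₄ : ∀ t, u₄ t =
      (1 / m) * (∫ s in (0:ℝ)..t, f s * (∫ u in (0:ℝ)..s, (∫ w in (0:ℝ)..u, f w)))
      + (1 / (2 * m)) * ∫ s in (0:ℝ)..t, (∫ u in (0:ℝ)..s, f u) ^ 2) :
    u₁ 0 = 0 ∧ u₂ 0 = 0 ∧ u₃ 0 = 0 ∧ u₄ 0 = 0 ∧
    ∀ t, HasDerivAt u₁ (1 / m) t ∧ HasDerivAt u₂ (-f t) t ∧
      HasDerivAt u₃ (-u₂ t / m) t ∧
      HasDerivAt u₄ (f t * u₃ t + (u₂ t) ^ 2 / (2 * m)) t := by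
  have key : ∀ g : ℝ → ℝ, Continuous g → ∀ t,
      HasDerivAt (fun x => ∫ s in (0:ℝ)..x, g s) (g t) t := fun g hg t =>
    intervalIntegral.integral_hasDerivAt_right (hg.intervalIntegrable _ _)
      hg.stronglyMeasurable.stronglyMeasurableAtFilter hg.continuousAt
  have kc : ∀ g : ℝ → ℝ, Continuous g → Continuous (fun x => ∫ s in (0:ℝ)..x, g s) :=
    fun g hg => continuous_iff_continuousAt.2 fun t => (key g hg t).continuousAt
  have c1 := kc f hf
  have c2 := kc _ c1
  refine ⟨by simp [hu₁], by simp [hu₂], by simp [hu₃], by simp [hu₄], fun t => ⟨?_, ?_, ?_, ?_⟩⟩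
  · rw [funext hu₁]
    exact (hasDerivAt_id t).div_const m
  · rw [funext hu₂]
    exact (key f hf t).neg
  · rw [funext hu₃]
    refine ((key _ c1 t).const_mul (1 / m)).congr_deriv ?_
    rw [hu₂]
    ring
  · rw [funext hu₄]
    refine (((key _ (hf.mul c2) t).const_mul (1 / m)).add
      ((key _ (c1.pow 2) t).const_mul (1 / (2 * m)))).congr_deriv ?_
    rw [hu₂, hu₃]
    simp only [Pi.mul_apply, Pi.pow_apply]
    ring
end

section
/- Let m ∈ ℝ with m ≠ 0, let f : ℝ → ℝ be continuous, and define v₁(t) = t/m, v₂(t) = −∫₀ᵗ f(s) ds, v₃(t) = (1/m)·∫₀ᵗ (∫₀^{s} f(u) du) ds, and v₄(t) = −(1/(2m))·∫₀ᵗ (∫₀^{s} f(u) du)² ds. Let ψ₀ : ℝ → ℂ be differentiable and define ψ : ℝ × ℝ → ℂ by ψ(p,t) = exp(−i·v₄(t)) · exp( i·( v₃(t)·(p + v₂(t)) + v₁(t)·(p + v₂(t))²/2 ) ) · ψ₀(p + v₂(t)). Then ψ(p,0) = ψ₀(p) for all p, and ψ satisfies the first-order partial differential equation ∂ψ/∂t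 (p,t) + f(t)·∂ψ/∂p (p,t) = i·(p²/(2m))·ψ(p,t) for all (p,t) ∈ ℝ × ℝ. Moreover v₁(0) = v₂(0) = v₃(0) = v₄(0) = 0 and v₁' = 1/m, v₂' = −f, v₃' = −v₂/m, v₄' = −v₂²/(2m). -/
open Complex in
/-- The explicit wave function, in momentum representation, for the quantum
time-dependent linear potential `H = P²/(2m) + f(t) X`: with the Wei–Norman
coordinates `v₁, v₂, v₃, v₄`, the function
`ψ(p,t) = e^{−i v₄(t)} e^{i(v₃(t)(p+v₂(t)) + v₁(t)(p+v₂(t))²/2)} ψ₀(p+v₂(t))`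
satisfies `ψ(p,0) = ψ₀(p)` and the evolution equation
`∂ψ/∂t + f(t) ∂ψ/∂p = i (p²/(2m)) ψ`, and the `vᵢ` solve the Wei–Norman
system with zero initial conditions. -/
theorem quantum_linear_potential_wave_function
    (m : ℝ) (hm : m ≠ 0) (f : ℝ → ℝ) (hf : Continuous f)
    (v₁ v₂ v₃ v₄ : ℝ → ℝ)
    (hv₁ : ∀ t, v₁ t = t / m)
    (hv₂ : ∀ t, v₂ t = -∫ s in (0:ℝ)..t, f s)
    (hv₃ : ∀ t, v₃ t = (1 / m) * ∫ s in (0:ℝ)..t, (∫ u in (0:ℝ)..s, f u))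
    (hv₄ : ∀ t, v₄ t = -(1 / (2 * m)) * ∫ s in (0:ℝ)..t, (∫ u in (0:ℝ)..s, f u) ^ 2)
    (ψ₀ : ℝ → ℂ) (hψ₀ : Differentiable ℝ ψ₀)
    (ψ : ℝ × ℝ → ℂ)
    (hψ : ∀ p t, ψ (p, t) =
      Complex.exp (-Complex.I * (v₄ t : ℂ)) *
      Complex.exp (Complex.I *
        ((v₃ t : ℂ) * ((p : ℂ) + (v₂ t : ℂ)) +
          (v₁ t : ℂ) * ((p : ℂ) + (v₂ t : ℂ)) ^ 2 / 2)) *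
      ψ₀ (p + v₂ t)) :
    (∀ p : ℝ, ψ (p, 0) = ψ₀ p) ∧
    (∀ (p t : ℝ), ∃ dψdt dψdp : ℂ,
      HasDerivAt (fun τ => ψ (p, τ)) dψdt t ∧
      HasDerivAt (fun q => ψ (q, t)) dψdp p ∧
      dψdt + (f t : ℂ) * dψdp =
        Complex.I * ((p : ℂ) ^ 2 / (2 * (m : ℂ))) * ψ (p, t)) ∧
    (v₁ 0 = 0 ∧ v₂ 0 = 0 ∧ v₃ 0 = 0 ∧ v₄ 0 = 0) ∧
    (∀ t, HasDerivAt v₁ (1 / m) t ∧ HasDerivAt v₂ (-f t) t ∧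
      HasDerivAt v₃ (-v₂ t / m) t ∧
      HasDerivAt v₄ (-(v₂ t) ^ 2 / (2 * m)) t) := by
  have hF : ∀ t, HasDerivAt (fun t => ∫ s in (0:ℝ)..t, f s) (f t) t := fun t =>
    intervalIntegral.integral_hasDerivAt_right (hf.intervalIntegrable _ _)
      hf.aestronglyMeasurable.stronglyMeasurableAtFilter hf.continuousAt
  have hFc : Continuous (fun t => ∫ s in (0:ℝ)..t, f s) :=
    continuous_iff_continuousAt.2 fun t => (hF t).continuousAt
  have hF2c : Continuous (fun t => (∫ s in (0:ℝ)..t, f s) ^ 2) := hFc.pow 2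
  have d1 : ∀ t, HasDerivAt v₁ (1 / m) t := by
    intro t
    rw [funext hv₁]
    exact (hasDerivAt_id t).div_const m
  have d2 : ∀ t, HasDerivAt v₂ (-f t) t := by
    intro t
    rw [funext hv₂]
    exact (hF t).neg
  have d3 : ∀ t, HasDerivAt v₃ (-v₂ t / m) t := by
    intro t
    have h := (intervalIntegral.integral_hasDerivAt_right (hFc.intervalIntegrable 0 t)
      hFc.aestronglyMeasurable.stronglyMeasurableAtFilter hFc.continuousAt).const_mul (1 / m)
    rw [funext hv₃]
    refine h.congr_deriv ?_
    rw [hv₂]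
    ring
  have d4 : ∀ t, HasDerivAt v₄ (-(v₂ t) ^ 2 / (2 * m)) t := by
    intro t
    have h := (intervalIntegral.integral_hasDerivAt_right (hF2c.intervalIntegrable 0 t)
      hF2c.aestronglyMeasurable.stronglyMeasurableAtFilter
      hF2c.continuousAt).const_mul (-(1 / (2 * m)))
    rw [funext hv₄]
    refine h.congr_deriv ?_
    rw [hv₂]
    ring
  have z1 : v₁ 0 = 0 := by simp [hv₁]
  have z2 : v₂ 0 = 0 := by simp [hv₂]
  have z3 : v₃ 0 = 0 := by simp [hv₃]
  have z4 : v₄ 0 = 0 := by simp [hv₄]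
  refine ⟨fun p => by simp [hψ, z1, z2, z3, z4], fun p t => ?_, ⟨z1, z2, z3, z4⟩,
    fun t => ⟨d1 t, d2 t, d3 t, d4 t⟩⟩
  have hmc : (m : ℂ) ≠ 0 := Complex.ofReal_ne_zero.2 hm
  -- time derivative
  have e1 := (d1 t).ofReal_comp
  have e2 := (d2 t).ofReal_comp.const_add (p : ℂ)
  have e3 := (d3 t).ofReal_comp
  have e4 := (d4 t).ofReal_comp
  have g0 : HasDerivAt (fun τ => ψ₀ (p + v₂ τ)) ((-f t) • deriv ψ₀ (p + v₂ t)) t :=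
    HasDerivAt.scomp t (hψ₀ (p + v₂ t)).hasDerivAt ((d2 t).const_add p)
  have ht := (((e4.const_mul (-Complex.I)).cexp).mul
    ((((e3.mul e2).add ((e1.mul (e2.pow 2)).div_const 2)).const_mul Complex.I).cexp)).mul g0
  -- momentum derivative
  have c2 := (hasDerivAt_id p).ofReal_comp.add_const (v₂ t : ℂ)
  have k0 : HasDerivAt (fun q => ψ₀ (q + v₂ t)) ((1 : ℝ) • deriv ψ₀ (p + v₂ t)) p :=
    HasDerivAt.scomp p (hψ₀ (p + v₂ t)).hasDerivAt ((hasDerivAt_id p).add_const (v₂ t))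
  have hp := ((((c2.const_mul (v₃ t : ℂ)).add
    (((c2.pow 2).const_mul (v₁ t : ℂ)).div_const 2)).const_mul Complex.I).cexp.const_mul
    (Complex.exp (-Complex.I * (v₄ t : ℂ)))).mul k0
  refine ⟨_, _, ht.congr_of_eventuallyEq (Filter.Eventually.of_forall fun τ => hψ p τ),
    hp.congr_of_eventuallyEq (Filter.Eventually.of_forall fun q => hψ q t), ?_⟩
  rw [hψ]
  simp only [Pi.mul_apply, Pi.add_apply, Pi.pow_apply, Complex.real_smul, id]
  push_cast
  generalize Complex.exp (-Complex.I * (v₄ t : ℂ)) = A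
  generalize Complex.exp (Complex.I *
        ((v₃ t : ℂ) * ((p : ℂ) + (v₂ t : ℂ)) +
          (v₁ t : ℂ) * ((p : ℂ) + (v₂ t : ℂ)) ^ 2 / 2)) = B
  field_simp
  ring
end
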